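/- arXiv:1602.01807 — 2 statements merged into one kernel-verified Lean document; each statement's English description precedes it below -/
import Mathlib

section
/- Let p be a prime with p ≡ 3 (mod 8), q = p^s with s even, and ψ a multiplicative character of order 4 on F_q. Then G(ψ) = -q^{1/2}. -/
/-!
Let `q = p ^ (2 * γ)`. The sign of the quartic Gauss sum `G(ψ)` is read off from the sums
`S(c) = ∑ y, e (c * y ^ (p + 1))`, which can be evaluated completely because `y ^ (p + 1)` is a
quadratic form over the prime field.

* For `c ≠ 0` the square `S(c) ^ 2` equals `q` times the size of the radical
  `{h | c ^ p * h ^ (p ^ 2) + c * h = 0}` (`hermSum_mul_neg`, `hermSum_neg`), and that size is `1`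
  or `p ^ 2` (`card_radical`). Moreover `S(c) ≡ 1` modulo `p + 1` (`hermSum_eq_one_add`), and
  `-p ≡ 1` modulo `p + 1`, so `S(c)` is `(-p) ^ γ`, or `(-p) ^ (γ + 1)` when the radical is
  nontrivial (`hermSum_eq`).
* As `4 ∣ p + 1`, interchanging summations gives `∑ c, ψ c * S(c) = (q - 1) * G(ψ)`
  (`sum_quartic_mul_hermSum`).
* If the radical of `c` is nontrivial, then `ψ c = ψ x` for some `x` with `x ^ (p - 1) = -1`, and
  `p ≡ 3 (mod 8)` makes this `(-1) ^ γ` (`quartic_apply`). The number of such `c` is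
  `(q - 1) / (p + 1)` because `∑ c ≠ 0, S(c) = 0` (`sum_hermSum_units`).

Only the difference `(-p) ^ (γ + 1) - (-p) ^ γ = -(p + 1) * (-p) ^ γ` survives in
`∑ c, ψ c * S(c)`, which is thus `-(q - 1) * (-1) ^ γ * (-p) ^ γ`, and `G(ψ) = -p ^ γ`.
-/

/-- The Gauss sum over a finite field of characteristic `p`, with values in `ℂ`. -/
noncomputable def gaussC (p : ℕ) (F : Type*) [Field F] [Fintype F] [Algebra (ZMod p) F]
    (ψ : MulChar F ℂ) : ℂ :=
  ∑ x : F, ψ x *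
    Complex.exp (2 * Real.pi * Complex.I * ((Algebra.trace (ZMod p) F x).val : ℂ) / p)

open Finset

/-! ### Arithmetic of `p ^ (2 * γ) - 1` and the sign criterion -/

lemma exists_geom {p : ℕ} (hp : p % 2 = 1) (s : ℕ) :
    ∃ n, p ^ (2 * s) = (p ^ 2 - 1) * n + 1 ∧ n % 2 = s % 2 := by
  have h1 : 1 ≤ p ^ 2 := Nat.one_le_pow _ _ (by omega)
  induction s with
  | zero => exact ⟨0, by simp⟩
  | succ s ih =>
    obtain ⟨n, hn, hn2⟩ := ih
    refine ⟨p ^ 2 * n + 1, ?_, ?_⟩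
    · rw [mul_add, pow_add, hn]
      zify [h1]
      ring
    · have : p ^ 2 % 2 = 1 := by simp [Nat.pow_mod, hp]
      rw [Nat.add_mod, Nat.mul_mod, this, one_mul, Nat.mod_mod]
      omega

/-- A number that is `± p ^ k` and congruent to `1` modulo `p + 1` in the algebraic integers is
`(-p) ^ k`: otherwise `p + 1` would divide `2`. -/
lemma eq_neg_pow {p k : ℕ} (hp : 2 ≤ p) {S A : ℂ} (hA : IsIntegral ℤ A)
    (hS : S = 1 + (p + 1) * A) (hsq : S ^ 2 = (p : ℂ) ^ (2 * k)) : S = (-(p : ℂ)) ^ k := by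
  have h1 : S ^ 2 = ((-(p : ℂ)) ^ k) ^ 2 := by
    rw [hsq, ← pow_mul, mul_comm k 2, pow_mul, pow_mul, neg_sq]
  rcases sq_eq_sq_iff_eq_or_eq_neg.1 h1 with h | h
  · exact h
  exfalso
  obtain ⟨B, hB⟩ := sub_dvd_pow_sub_pow (-(p : ℤ)) 1 k
  have hB' : (-(p : ℂ)) ^ k - 1 = (-p - 1) * B := by
    have := congrArg (Int.cast : ℤ → ℂ) hB
    push_cast at this
    simpa using this
  have hp0 : (p : ℂ) + 1 ≠ 0 := by exact_mod_cast Nat.succ_ne_zero p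
  have h2 : ((-2 / (p + 1) : ℚ) : ℂ) = A - B := by
    push_cast
    rw [div_eq_iff hp0]
    linear_combination hS - h + hB'
  have h3 : IsIntegral ℤ (-2 / (p + 1) : ℚ) := by
    rw [← isIntegral_algebraMap_iff (B := ℂ) (algebraMap ℚ ℂ).injective]
    simp only [eq_ratCast]
    rw [h2]
    exact hA.sub (isIntegral_algebraMap (R := ℤ) (x := B))
  obtain ⟨z, hz⟩ := IsIntegrallyClosed.isIntegral_iff.1 h3
  have hp0' : (p : ℚ) + 1 ≠ 0 := by exact_mod_cast Nat.succ_ne_zero p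
  simp only [eq_intCast] at hz
  rw [eq_div_iff hp0'] at hz
  have h4 : z * ((p : ℤ) + 1) = -2 := by exact_mod_cast hz
  have h5 : (p : ℤ) + 1 ∣ 2 := ⟨-z, by linarith⟩
  have := Int.le_of_dvd (by norm_num) h5
  omega

/-- The shape of `q - 1` for `q = p ^ (2 * γ)`: it is `p ^ 2 - 1` times an integer `n` of the same
parity as `γ`, and it is exposed as a multiple of `8` through `p = 8 * m + 3`. -/
lemma arith_data {p q : ℕ} {γ : ℕ} (hp : p % 8 = 3) (hcard : q = p ^ (2 * γ)) :
    ∃ m n, p = 8 * m + 3 ∧ q - 1 = (p ^ 2 - 1) * n ∧ n % 2 = γ % 2 ∧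
      q - 1 = 8 * ((4 * m + 1) * (2 * m + 1) * n) := by
  obtain ⟨n, hn, hn2⟩ := exists_geom (show p % 2 = 1 by omega) γ
  obtain ⟨m, rfl⟩ : ∃ m, p = 8 * m + 3 := ⟨p / 8, by omega⟩
  refine ⟨m, n, rfl, by omega, hn2, ?_⟩
  rw [hcard, hn, Nat.add_sub_cancel, ← mul_assoc]
  congr 1
  rw [Nat.sub_eq_iff_eq_add (Nat.one_le_pow _ _ (by omega))]
  ring

/-! ### Values of additive characters -/

/-- If `x ^ p = -x`, Frobenius invariance gives `e x = e (-x) = (e x)⁻¹`; since `e x` is also a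
`p`-th root of unity and `p` is odd, it is `1`. -/
lemma addChar_eq_one {p : ℕ} {F : Type*} [Field F] [Fact p.Prime] [CharP F p] (hp2 : p ≠ 2)
    {e : AddChar F ℂ}
    (hfr : ∀ x, e (x ^ p) = e x) {x : F} (hx : x ^ p = -x) : e x = 1 := by
  have h1 : e x ^ 2 = 1 := by
    have := hfr x
    rw [hx] at this
    rw [sq]
    nth_rewrite 1 [← this]
    rw [← AddChar.map_add_eq_mul]; simp
  have h2 : e x ^ p = 1 := by
    rw [← AddChar.map_nsmul_eq_pow]; simp
  have h3 : Nat.Coprime 2 p :=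
    (Nat.coprime_primes Nat.prime_two Fact.out).2 (Ne.symm hp2)
  have := pow_gcd_eq_one.2 ⟨h1, h2⟩
  rwa [h3, pow_one] at this

lemma isIntegral_addChar {p : ℕ} {F : Type*} [Field F] [Fact p.Prime] [CharP F p]
    (e : AddChar F ℂ) (x : F) : IsIntegral ℤ (e x) := by
  refine IsIntegral.of_pow (n := p) (Nat.Prime.pos Fact.out) ?_
  rw [← AddChar.map_nsmul_eq_pow]
  simpa using isIntegral_one

/-! ### The sums `∑ y, e (c * y ^ (p + 1))` -/

/-- The exponential sum `∑ y, e (c * y ^ (p + 1))`. In characteristic `p` the map `y ↦ y ^ (p + 1)`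
is quadratic over the prime field, so this is a quadratic Gauss sum in several variables. -/
noncomputable def hermSum (p : ℕ) {F : Type*} [Field F] [Fintype F] (e : AddChar F ℂ) (c : F) : ℂ :=
  ∑ y : F, e (c * y ^ (p + 1))

section
variable {p : ℕ} {F : Type*} [Field F] [Fintype F]

/-- Weil differencing: substituting `x = y + h` in the double sum leaves an exponent that is additive
in `y`, and orthogonality keeps only the `h` in the radical `c ^ p * h ^ (p ^ 2) + c * h = 0`. -/
lemma hermSum_mul_neg [Fact p.Prime] [CharP F p] {e : AddChar F ℂ} (he : e.IsPrimitive)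
    (hfr : ∀ x, e (x ^ p) = e x) (c : F) :
    open Classical in
    hermSum p e c * hermSum p e (-c) = Fintype.card F *
      ∑ h : F with c ^ p * h ^ (p ^ 2) + c * h = 0, e (c * h ^ (p + 1)) := by
  classical
  have key : ∀ h : F, ∑ y : F, e (c * (y + h) ^ (p + 1)) * e (-c * y ^ (p + 1))
      = if c ^ p * h ^ (p ^ 2) + c * h = 0 then Fintype.card F * e (c * h ^ (p + 1)) else 0 := by
    intro h
    have h1 : ∀ y : F, e (c * (y + h) ^ (p + 1)) * e (-c * y ^ (p + 1))
        = e (c * h ^ (p + 1)) * e (y ^ p * (c ^ p * h ^ (p ^ 2) + c * h)) := by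
      intro y
      have h2 : c * (y + h) ^ (p + 1) + -c * y ^ (p + 1)
          = c * h ^ (p + 1) + (c * h * y ^ p + c * h ^ p * y) := by
        rw [pow_succ, add_pow_char]; ring
      have h3 : y ^ p * (c ^ p * h ^ (p ^ 2) + c * h) = c * h * y ^ p + (c * h ^ p * y) ^ p := by
        rw [mul_pow, mul_pow, ← pow_mul, sq]; ring
      rw [← AddChar.map_add_eq_mul, h2, h3, AddChar.map_add_eq_mul, AddChar.map_add_eq_mul,
        AddChar.map_add_eq_mul, hfr]
    simp_rw [h1]
    rw [← mul_sum]
    have h4 := AddChar.sum_mulShift (c ^ p * h ^ (p ^ 2) + c * h) he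
    -- reindex by Frobenius, since the exponent is linear in `y ^ p`
    rw [← Equiv.sum_comp (frobeniusEquiv F p).toEquiv] at h4
    simp only [RingEquiv.toEquiv_eq_coe, EquivLike.coe_coe, frobeniusEquiv_def] at h4
    rw [h4]
    split_ifs <;> simp [mul_comm]
  unfold hermSum
  rw [sum_mul_sum, sum_comm]
  have : ∀ y : F, ∑ x : F, e (c * x ^ (p + 1)) * e (-c * y ^ (p + 1))
      = ∑ h : F, e (c * (y + h) ^ (p + 1)) * e (-c * y ^ (p + 1)) := fun y =>
    (Equiv.sum_comp (Equiv.addLeft y) (fun x => e (c * x ^ (p + 1)) * e (-c * y ^ (p + 1)))).symm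
  simp_rw [this]
  rw [sum_comm]
  simp_rw [key]
  rw [sum_filter, mul_sum]
  simp

lemma card_units_pow_eq_one {d : ℕ} (hd : d ∣ Fintype.card F - 1) :
    open Classical in #{u : Fˣ | u ^ d = 1} = d := by
  classical
  have h := IsCyclic.card_powMonoidHom_ker (G := Fˣ) d
  rw [Nat.card_eq_fintype_card (α := Fˣ), Fintype.card_units, Nat.gcd_eq_right hd] at h
  rw [Nat.card_eq_fintype_card, Fintype.card_subtype] at h
  simpa [MonoidHom.mem_ker] using h

lemma sum_eq_zero_add_units [Fintype Fˣ] (f : F → ℂ) : ∑ x, f x = f 0 + ∑ u : Fˣ, f u := by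
  classical
  rw [Fintype.sum_eq_add_sum_subtype_ne f 0]
  congr 1
  exact (Equiv.sum_comp (unitsEquivNeZero (G₀ := F)) (fun x => f x)).symm

/-- The nonzero fibres of `y ↦ y ^ (p + 1)` have `p + 1` elements, so `hermSum` is `1` modulo
`p + 1`. -/
lemma hermSum_eq_one_add [Fact p.Prime] [CharP F p] (hd : p + 1 ∣ Fintype.card F - 1)
    (e : AddChar F ℂ) (c : F) :
    ∃ A : ℂ, IsIntegral ℤ A ∧ hermSum p e c = 1 + (p + 1) * A := by
  classical
  refine ⟨∑ v ∈ univ.image (fun u : Fˣ => u ^ (p + 1)), e (c * v),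
    IsIntegral.sum _ fun v _ => isIntegral_addChar (p := p) e _, ?_⟩
  rw [hermSum, sum_eq_zero_add_units (F := F)]
  congr 1
  · simp
  · have h := Finset.sum_comp (s := univ) (fun v : Fˣ => e (c * v)) (fun u : Fˣ => u ^ (p + 1))
    simp only [Units.val_pow_eq_pow_val] at h
    rw [h, mul_sum]
    refine sum_congr rfl fun v hv => ?_
    have h2 : #{u : Fˣ | u ^ (p + 1) = v} = p + 1 := by
      have h3 := MonoidHom.card_fiber_eq_of_mem_range (powMonoidHom (p + 1) : Fˣ →* Fˣ) (x := v)
        (y := 1) (by simpa using hv) ⟨1, by simp⟩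
      simp only [powMonoidHom_apply] at h3
      rw [h3]
      convert card_units_pow_eq_one hd
    rw [h2]
    simp

/-- The set is the radical of the quadratic form `y ↦ c * y ^ (p + 1)` followed by the trace. It is
stable under multiplication by the field with `p ^ 2` elements, and a nonzero element `h₀` of it
identifies it with that field. -/
lemma card_radical [Fact p.Prime] [CharP F p] (hd : p ^ 2 - 1 ∣ Fintype.card F - 1) {c h₀ : F}
    (hc : c ≠ 0) (hh : h₀ ≠ 0) (hr : c ^ p * h₀ ^ (p ^ 2) + c * h₀ = 0) :
    open Classical in #{h : F | c ^ p * h ^ (p ^ 2) + c * h = 0} = p ^ 2 := by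
  classical
  have hp1 : 0 < p ^ 2 := pow_pos (Nat.Prime.pos Fact.out) 2
  have h1 : #{h : F | c ^ p * h ^ (p ^ 2) + c * h = 0} = #{t : F | t ^ (p ^ 2) = t} := by
    symm
    refine card_bij' (fun t _ => h₀ * t) (fun h _ => h₀⁻¹ * h) ?_ ?_ ?_ ?_
    · intro t ht
      simp only [mem_filter, mem_univ, true_and] at ht ⊢
      rw [mul_pow, ht]
      linear_combination t * hr
    · intro h ht
      simp only [mem_filter, mem_univ, true_and] at ht ⊢
      have h2 : h = h₀ * (h₀⁻¹ * h) := by field_simp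
      generalize h₀⁻¹ * h = t at *
      subst h2
      rw [mul_pow] at ht
      have h3 : c * h₀ * (t ^ p ^ 2 - t) = 0 := by linear_combination t ^ p ^ 2 * hr - ht
      have h4 := (mul_eq_zero.1 h3).resolve_left (mul_ne_zero hc hh)
      exact sub_eq_zero.1 h4
    · intro t _; field_simp
    · intro t _; field_simp
  have h2 : ({t : F | t ^ (p ^ 2) = t} : Finset F)
      = insert 0 (({u : Fˣ | u ^ (p ^ 2 - 1) = 1} : Finset Fˣ).map
        ⟨Units.val, Units.val_injective⟩) := by
    ext t
    simp only [mem_filter, mem_univ, true_and, mem_insert, mem_map, Function.Embedding.coeFn_mk]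
    by_cases ht : t = 0
    · simp [ht, (Fact.out : p.Prime).ne_zero]
    · lift t to Fˣ using isUnit_iff_ne_zero.2 ht
      simp only [Units.val_inj, exists_eq_right, ht, false_or]
      rw [← Nat.sub_add_cancel hp1, pow_succ, Nat.add_sub_cancel]
      norm_cast
      simp
  rw [h1, h2, card_insert_of_notMem (by simp), card_map]
  have := card_units_pow_eq_one hd
  omega

lemma exists_generator_units (hodd : Fintype.card F % 2 = 1) :
    ∃ g : Fˣ, (∀ x, ∃ j : ℕ, g ^ j = x) ∧ orderOf g = Fintype.card F - 1 ∧
      g ^ ((Fintype.card F - 1) / 2) = -1 := by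
  classical
  obtain ⟨g, hg⟩ := IsCyclic.exists_generator (α := Fˣ)
  have ho : orderOf g = Fintype.card F - 1 := by
    rw [orderOf_eq_card_of_forall_mem_zpowers hg, Nat.card_eq_fintype_card, Fintype.card_units]
  have h1 := Fintype.one_lt_card (α := F)
  refine ⟨g, fun x => (mem_powers_iff_mem_zpowers.2 (hg x)), ho, ?_⟩
  have h2 : (g ^ ((Fintype.card F - 1) / 2)) ^ 2 = 1 := by
    rw [← pow_mul, Nat.div_mul_cancel (by omega), ← ho, pow_orderOf_eq_one]
  have h3 : g ^ ((Fintype.card F - 1) / 2) ≠ 1 := by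
    intro h
    have := Nat.le_of_dvd (by omega) (orderOf_dvd_of_pow_eq_one h)
    omega
  have h4 : (((g ^ ((Fintype.card F - 1) / 2) : Fˣ)) : F) ^ 2 = 1 := by
    rw [← Units.val_pow_eq_pow_val, h2, Units.val_one]
  rcases mul_self_eq_one_iff.1 ((sq _).symm.trans h4) with h | h
  · exact absurd (Units.ext h) h3
  · exact Units.ext h

/-- Since `-1` is a `(p + 1)`-th power in `F`, `hermSum` is even in `c`. -/
lemma hermSum_neg {γ : ℕ} (hp : p % 8 = 3) (hcard : Fintype.card F = p ^ (2 * γ))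
    (e : AddChar F ℂ) (c : F) : hermSum p e (-c) = hermSum p e c := by
  obtain ⟨m, n, hm, -, -, h8⟩ := arith_data hp hcard
  have h1 := Fintype.one_lt_card (α := F)
  obtain ⟨g, -, -, hg⟩ := exists_generator_units (F := F) (by omega)
  have hu : (g ^ ((4 * m + 1) * n)) ^ (p + 1) = -1 := by
    rw [← hg, ← pow_mul, h8, hm]
    congr 1
    rw [eq_comm]
    apply Nat.div_eq_of_eq_mul_left (by norm_num)
    ring
  have hu' : ((g ^ ((4 * m + 1) * n) : Fˣ) : F) ^ (p + 1) = -1 := by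
    rw [← Units.val_pow_eq_pow_val, hu]; simp
  unfold hermSum
  rw [← Equiv.sum_comp (Units.mulLeft (g ^ ((4 * m + 1) * n))) (fun y => e (c * y ^ (p + 1)))]
  refine sum_congr rfl fun y _ => ?_
  rw [Units.mulLeft_apply, mul_pow, hu']
  ring_nf

/-- The absolute value comes from the size of the radical, which is `1` or `p ^ 2`, and the sign from
the congruence modulo `p + 1`. -/
lemma hermSum_eq [Fact p.Prime] [CharP F p] {γ : ℕ} (hp : p % 8 = 3)
    (hcard : Fintype.card F = p ^ (2 * γ)) {e : AddChar F ℂ} (he : e.IsPrimitive)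
    (hfr : ∀ x, e (x ^ p) = e x) {c : F} (hc : c ≠ 0) :
    open Classical in
    hermSum p e c = if ∃ h ≠ 0, c ^ p * h ^ (p ^ 2) + c * h = 0 then (-(p : ℂ)) ^ (γ + 1)
      else (-(p : ℂ)) ^ γ := by
  classical
  obtain ⟨m, n, hm, hn, -, -⟩ := arith_data hp hcard
  have hd2 : p ^ 2 - 1 ∣ Fintype.card F - 1 := ⟨n, hn⟩
  have hd1 : p + 1 ∣ Fintype.card F - 1 :=
    dvd_trans ⟨p - 1, by simpa using Nat.sq_sub_sq p 1⟩ hd2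
  obtain ⟨A, hA, hS⟩ := hermSum_eq_one_add hd1 e c
  have h1 := hermSum_mul_neg he hfr c
  rw [hermSum_neg hp hcard, ← sq] at h1
  have h2 : ∀ h ∈ ({h : F | c ^ p * h ^ (p ^ 2) + c * h = 0} : Finset F),
      e (c * h ^ (p + 1)) = 1 := by
    intro h hh
    simp only [mem_filter, mem_univ, true_and] at hh
    refine addChar_eq_one (p := p) (by omega) hfr ?_
    have h3 : (c * h ^ (p + 1)) ^ p = c ^ p * h ^ (p ^ 2) * h ^ p := by
      rw [mul_pow, ← pow_mul]; ring
    rw [h3, pow_succ]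
    linear_combination h ^ p * hh
  rw [sum_congr rfl h2, sum_const, hcard] at h1
  split_ifs with hex
  · obtain ⟨h₀, hh, hr⟩ := hex
    refine eq_neg_pow (by omega) hA hS ?_
    have h4 := card_radical hd2 hc hh hr
    rw [h1, h4]
    push_cast
    simp only [nsmul_eq_mul, mul_one]
    push_cast
    ring
  · refine eq_neg_pow (by omega) hA hS ?_
    have h4 : ({h : F | c ^ p * h ^ (p ^ 2) + c * h = 0} : Finset F) = {0} := by
      ext h
      simp only [mem_filter, mem_univ, true_and, mem_singleton]
      refine ⟨fun hh => by_contra fun h0 => hex ⟨h, h0, hh⟩, ?_⟩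
      rintro rfl
      simp [(Fact.out : p.Prime).ne_zero]
    rw [h1, h4]
    simp

/-! ### The quartic character and its Gauss sum -/

/-- If `g` generates the unit group and `x = g ^ j`, then `x ^ (p - 1) = -1` forces
`j ≡ 2 * γ` modulo `4`, while `ψ g ^ 2 = -1`. -/
lemma quartic_apply {γ : ℕ} (hp : p % 8 = 3)
    (hcard : Fintype.card F = p ^ (2 * γ)) {ψ : MulChar F ℂ} (hord : orderOf ψ = 4) {x : Fˣ}
    (hx : x ^ (p - 1) = -1) : ψ x = (-1) ^ γ := by
  obtain ⟨m, n, hm, -, hnγ, h8⟩ := arith_data hp hcard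
  have h1 := Fintype.one_lt_card (α := F)
  obtain ⟨g, hgen, hog, hg⟩ := exists_generator_units (F := F) (by omega)
  obtain ⟨j, rfl⟩ := hgen x
  have hψ4 : ψ g ^ 4 = 1 := by
    rw [← MulChar.pow_apply_coe, ← hord, pow_orderOf_eq_one, MulChar.one_apply_coe]
  have hψ2 : ψ g ^ 2 = -1 := by
    have h2 : ψ g ^ 2 ≠ 1 := by
      intro h
      have h3 : ψ ^ 2 = 1 := by
        ext a
        obtain ⟨i, rfl⟩ := hgen a
        rw [MulChar.pow_apply_coe, MulChar.one_apply_coe, Units.val_pow_eq_pow_val, map_pow,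
          ← pow_mul, mul_comm, pow_mul, h, one_pow]
      have := Nat.le_of_dvd (by norm_num) (orderOf_dvd_of_pow_eq_one h3)
      omega
    have h4 : ψ g ^ 2 * ψ g ^ 2 = 1 := by rw [← hψ4]; ring
    exact (mul_self_eq_one_iff.1 h4).resolve_left h2
  have h5 : j * (2 * (4 * m + 1)) ≡ (2 * (2 * m + 1) * n) * (2 * (4 * m + 1))
      [MOD (4 * (2 * m + 1) * n) * (2 * (4 * m + 1))] := by
    have h6 : g ^ (j * (2 * (4 * m + 1))) = g ^ ((2 * (2 * m + 1) * n) * (2 * (4 * m + 1))) := by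
      have h7 : p - 1 = 2 * (4 * m + 1) := by omega
      rw [pow_mul, ← h7, hx, ← hg, h8, h7]
      congr 1
      apply Nat.div_eq_of_eq_mul_left (by norm_num)
      ring
    have := pow_eq_pow_iff_modEq.1 h6
    rw [hog, h8] at this
    convert this using 1
    ring
  have h6 : j ≡ 2 * (2 * m + 1) * n [MOD 4 * (2 * m + 1) * n] :=
    Nat.ModEq.mul_right_cancel' (by omega) h5
  have h7 : j ≡ 2 * n [MOD 4] := by
    have h8 : 2 * (2 * m + 1) * n ≡ 2 * n [MOD 4] := by
      rw [show 2 * (2 * m + 1) * n = 4 * (m * n) + 2 * n by ring]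
      simp [Nat.ModEq]
    exact (h6.of_dvd ⟨(2 * m + 1) * n, by ring⟩).trans h8
  have h9 : j % 4 = (2 * γ) % 4 := by
    have : j % 4 = (2 * n) % 4 := h7
    omega
  rw [Units.val_pow_eq_pow_val, map_pow, pow_eq_pow_mod j hψ4, h9, ← pow_eq_pow_mod _ hψ4,
    pow_mul, hψ2]

/-- Since `4 ∣ p + 1`, the character `ψ` is trivial on `(p + 1)`-th powers, so every `y ≠ 0`
contributes exactly `gaussSum ψ e`. -/
lemma sum_quartic_mul_hermSum (hp : p % 8 = 3)
    {ψ : MulChar F ℂ} (hord : orderOf ψ = 4) (e : AddChar F ℂ) :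
    ∑ c, ψ c * hermSum p e c = (Fintype.card F - 1 : ℂ) * gaussSum ψ e := by
  classical
  have hψ1 : ψ ≠ 1 := by rintro rfl; simp at hord
  simp_rw [hermSum, mul_sum]
  rw [sum_comm, sum_eq_zero_add_units]
  have h0 : ∑ c, ψ c * e (c * 0 ^ (p + 1)) = 0 := by
    simp [MulChar.sum_eq_zero_of_ne_one hψ1]
  have h1 : ∀ u : Fˣ, ∑ c, ψ c * e (c * (u : F) ^ (p + 1)) = gaussSum ψ e := by
    intro u
    rw [← gaussSum_mulShift ψ e (u ^ (p + 1))]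
    have h2 : ψ ((u ^ (p + 1) : Fˣ) : F) = 1 := by
      obtain ⟨k, hk⟩ : 4 ∣ p + 1 := by omega
      rw [Units.val_pow_eq_pow_val, map_pow, hk, pow_mul, ← MulChar.pow_apply_coe, ← hord,
        pow_orderOf_eq_one, MulChar.one_apply_coe, one_pow]
    rw [h2, one_mul, gaussSum]
    simp only [AddChar.mulShift_apply, Units.val_pow_eq_pow_val]
    exact sum_congr rfl fun c _ => by rw [mul_comm c]
  rw [h0, sum_congr rfl fun u _ => h1 u, sum_const, card_univ, Fintype.card_units, zero_add,
    nsmul_eq_mul, Nat.cast_sub Fintype.card_pos, Nat.cast_one]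

lemma sum_hermSum_units [Fintype Fˣ] {e : AddChar F ℂ} (he : e.IsPrimitive) :
    ∑ c : Fˣ, hermSum p e c = 0 := by
  classical
  have h1 : ∑ c : F, hermSum p e c = Fintype.card F := by
    simp_rw [hermSum]
    rw [sum_comm]
    simp_rw [AddChar.sum_mulShift _ he]
    simp
  rw [sum_eq_zero_add_units] at h1
  have h2 : hermSum p e (0 : F) = Fintype.card F := by simp [hermSum]
  rw [h2] at h1
  simpa using h1

/-- The evaluation for any Frobenius-invariant primitive additive character. -/
theorem gaussSum_quartic [Fact p.Prime] [CharP F p] {γ : ℕ} (hp : p % 8 = 3)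
    (hcard : Fintype.card F = p ^ (2 * γ)) {ψ : MulChar F ℂ} (hord : orderOf ψ = 4)
    {e : AddChar F ℂ} (he : e.IsPrimitive) (hfr : ∀ x, e (x ^ p) = e x) :
    gaussSum ψ e = -(p : ℂ) ^ γ := by
  classical
  let P : Fˣ → Prop := fun c => ∃ h ≠ 0, (c : F) ^ p * h ^ (p ^ 2) + c * h = 0
  have hS : ∀ c : Fˣ, hermSum p e c
      = (-(p : ℂ)) ^ γ - (if P c then (p + 1) * (-(p : ℂ)) ^ γ else 0) := by
    intro c
    rw [hermSum_eq hp hcard he hfr c.ne_zero]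
    simp only [P]
    split_ifs <;> ring
  -- For a nonzero `h` in the radical of `c`, the element `x = c * h ^ (p + 1)` has `x ^ (p - 1) = -1`
  -- and `ψ x = ψ c`.
  have hψP : ∀ c : Fˣ, P c → ψ c = (-1) ^ γ := by
    rintro c ⟨h, h0, hr⟩
    lift h to Fˣ using isUnit_iff_ne_zero.2 h0
    have h1 : (c * h ^ (p + 1)) ^ (p - 1) = -1 := by
      have h2 : (c * h ^ (p + 1)) ^ (p - 1) * (c * h ^ (p + 1)) = -1 * (c * h ^ (p + 1)) := by
        rw [← pow_succ, Nat.sub_add_cancel (by omega)]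
        ext
        push_cast
        rw [mul_pow, ← pow_mul, show (p + 1) * p = p ^ 2 + p by ring, pow_add, pow_succ _ p]
        linear_combination (h : F) ^ p * hr
      exact mul_right_cancel h2
    have h2 := quartic_apply hp hcard hord h1
    obtain ⟨k, hk⟩ : 4 ∣ p + 1 := by omega
    rwa [Units.val_mul, map_mul, Units.val_pow_eq_pow_val, map_pow, hk, pow_mul,
      ← MulChar.pow_apply_coe, ← hord, pow_orderOf_eq_one, MulChar.one_apply_coe, one_pow,
      mul_one] at h2
  have hψ1 : ψ ≠ 1 := by rintro rfl; simp at hord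
  have hψ0 : ∑ c : Fˣ, ψ c = 0 := by
    have := MulChar.sum_eq_zero_of_ne_one hψ1
    rwa [sum_eq_zero_add_units, MulChar.map_zero, zero_add] at this
  have hq : (Fintype.card F - 1 : ℂ) ≠ 0 := by
    have h1 := Fintype.one_lt_card (α := F)
    rw [sub_ne_zero]
    exact_mod_cast h1.ne'
  have hp0 : (-(p : ℂ)) ^ γ ≠ 0 :=
    pow_ne_zero _ (neg_ne_zero.2 (Nat.cast_ne_zero.2 (Fact.out : p.Prime).ne_zero))
  -- The units with nontrivial radical are counted by summing `hS` over all units.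
  have hcount : (Fintype.card F - 1 : ℂ) = (p + 1) * #{c | P c} := by
    have h1 := sum_hermSum_units (p := p) he
    simp_rw [hS] at h1
    rw [sum_sub_distrib, ← sum_filter, sum_const, sum_const, card_univ, Fintype.card_units,
      nsmul_eq_mul, nsmul_eq_mul, Nat.cast_sub Fintype.card_pos, Nat.cast_one] at h1
    apply mul_right_cancel₀ hp0
    linear_combination h1
  have hsum := sum_quartic_mul_hermSum hp hord e
  rw [sum_eq_zero_add_units, MulChar.map_zero, zero_mul, zero_add] at hsum
  have h1 : ∀ c : Fˣ, ψ c * hermSum p e c = ψ c * (-(p : ℂ)) ^ γ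
      - (if P c then (p + 1) * (-1) ^ γ * (-(p : ℂ)) ^ γ else 0) := by
    intro c
    rw [hS, mul_sub]
    split_ifs with h
    · rw [hψP c h]; ring
    · simp
  simp_rw [h1] at hsum
  rw [sum_sub_distrib, ← sum_mul, hψ0, zero_mul, ← sum_filter, sum_const, nsmul_eq_mul] at hsum
  have h2 : (-1 : ℂ) ^ γ * (-(p : ℂ)) ^ γ = (p : ℂ) ^ γ := by
    rw [← mul_pow]; simp
  apply mul_left_cancel₀ hq
  rw [← hsum, hcount]
  linear_combination (-(#{c | P c} : ℂ) * (p + 1)) * h2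

end

theorem stmt11 (p s : ℕ) [Fact p.Prime] (hp : p % 8 = 3) (hs : 0 < s) (hse : Even s)
    (F : Type*) [Field F] [Fintype F] [Algebra (ZMod p) F] (hcard : Fintype.card F = p ^ s)
    (ψ : MulChar F ℂ) (hord : orderOf ψ = 4) :
    gaussC p F ψ = -(Real.sqrt ((p : ℝ) ^ s) : ℂ) := by
  obtain ⟨γ, rfl⟩ := hse
  rw [← two_mul] at *
  have : CharP F p := charP_of_injective_algebraMap (algebraMap (ZMod p) F).injective p
  let e : AddChar F ℂ := (ZMod.stdAddChar (N := p)).compAddMonoidHom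
    (Algebra.trace (ZMod p) F).toAddMonoidHom
  have he_apply : ∀ x, e x = ZMod.stdAddChar (Algebra.trace (ZMod p) F x) := fun _ => rfl
  have he : e.IsPrimitive := by
    refine AddChar.IsPrimitive.of_ne_one fun h => ?_
    obtain ⟨x, hx⟩ := Algebra.trace_surjective (ZMod p) F 1
    have h1 : e x = 1 := by rw [h]; rfl
    rw [he_apply, hx, ← AddChar.map_zero_eq_one (ZMod.stdAddChar (N := p))] at h1
    exact one_ne_zero (ZMod.injective_stdAddChar h1)
  have hfr : ∀ x, e (x ^ p) = e x := by
    intro x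
    have := Algebra.trace_eq_of_algEquiv (FiniteField.frobeniusAlgEquivOfAlgebraic (ZMod p) F) x
    simp only [FiniteField.coe_frobeniusAlgEquivOfAlgebraic, ZMod.card] at this
    rw [he_apply, he_apply, this]
  have h1 : gaussC p F ψ = gaussSum ψ e := by
    refine sum_congr rfl fun x _ => ?_
    rw [he_apply, ZMod.stdAddChar_apply, ZMod.toCircle_apply]
  rw [h1, gaussSum_quartic hp hcard hord he hfr, mul_comm 2 γ, pow_mul,
    Real.sqrt_sq (by positivity)]
  push_cast
  rfl
end

section
/- Let p ≡ 3 (mod 8), q = p^s with 16 | (q-1), and ψ an octic (order 8) multiplicative character on F_q. Then ψ is the lift via the norm map of some character χ of order 8 on F_{p^{s/2}}, and G(ψ) = q^{1/4}·J(χ), where J(χ) is the Jacobi sum over F_{p^{s/2}}. -/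
/-- The Jacobi sum over a finite field, with values in `ℂ`. -/
noncomputable def jacobiC (K : Type*) [Field K] [Fintype K] (χ : MulChar K ℂ) : ℂ :=
  ∑ x : K, χ x * χ (1 - x)

/-! ### Norm and trace of a quadratic extension of finite fields -/

section lift
variable {K F : Type*} [Field K] [Fintype K] [Field F] [Fintype F] [Algebra K F]

lemma finrank_two (hF : Fintype.card F = Fintype.card K ^ 2) : Module.finrank K F = 2 := by
  have h := Module.card_eq_pow_finrank (K := K) (V := F)
  rw [hF] at h
  exact (Nat.pow_right_injective (Fintype.one_lt_card (α := K)) h).symm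

lemma algebraMap_norm_quad (hF : Fintype.card F = Fintype.card K ^ 2) (x : F) :
    algebraMap K F (Algebra.norm K x) = x * x ^ Fintype.card K := by
  rw [FiniteField.algebraMap_norm_eq_prod_pow, finrank_two hF]
  simp [Finset.prod_range_succ]

lemma algebraMap_trace_quad (hF : Fintype.card F = Fintype.card K ^ 2) (x : F) :
    algebraMap K F (Algebra.trace K F x) = x + x ^ Fintype.card K := by
  rw [FiniteField.algebraMap_trace_eq_sum_pow, finrank_two hF]
  simp [Finset.sum_range_succ]

omit [Fintype F] in
lemma algebraMap_pow_card (a : K) : (algebraMap K F a) ^ Fintype.card K = algebraMap K F a := by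
  rw [← map_pow, FiniteField.pow_card]

omit [Fintype F] in
lemma add_pow_card_base (x y : F) :
    (x + y) ^ Fintype.card K = x ^ Fintype.card K + y ^ Fintype.card K := by
  have := map_add (FiniteField.frobeniusAlgHom K F) x y
  simpa using this

/-- Every element of `K` becomes a square in the quadratic extension. -/
lemma exists_sqrt_base (hF : Fintype.card F = Fintype.card K ^ 2) (h2 : (2 : K) ≠ 0)
    (D : K) : ∃ δ : F, δ ^ 2 = algebraMap K F D := by
  by_cases hD : D = 0
  · exact ⟨0, by simp [hD]⟩
  have hK2 : ringChar K ≠ 2 := fun h ↦ h2 (by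
    have := ringChar.Nat.cast_ringChar (R := K); rw [h] at this; exact_mod_cast this)
  have hF2 : ringChar F ≠ 2 := by rwa [← Algebra.ringChar_eq K F]
  have hD' : algebraMap K F D ≠ 0 := by simpa using hD
  have hsq : IsSquare (algebraMap K F D) := by
    rw [FiniteField.isSquare_iff hF2 hD', hF]
    obtain ⟨r, hr⟩ := Nat.odd_iff.mpr (FiniteField.odd_card_of_char_ne_two hK2)
    have h1 : D ^ (2 * r) = 1 := by
      have := FiniteField.pow_card_sub_one_eq_one D hD
      rwa [hr, Nat.add_sub_cancel] at this
    have : Fintype.card K ^ 2 / 2 = 2 * r * (r + 1) := by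
      rw [hr]
      have : (2 * r + 1) ^ 2 = 2 * (2 * r * (r + 1)) + 1 := by ring
      omega
    rw [this, pow_mul, ← map_pow, h1, map_one, one_pow]
  obtain ⟨δ, h⟩ := hsq
  exact ⟨δ, by rw [h, sq]⟩

open Classical in
/-- The ordered factorizations of `X ^ 2 - t X + n` over `K` and the elements of `F` with norm `n`
and trace `t` are two in number when taken together. With `δ` a square root in `F` of the
discriminant, the cases are `δ = 0` (one of each), `δ ∈ K` (two factorizations) and `δ ∉ K`
(two elements of `F`). -/
lemma card_norm_trace_fiber (hF : Fintype.card F = Fintype.card K ^ 2) (h2 : (2 : K) ≠ 0)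
    (n t : K) :
    (Finset.univ.filter fun x : F ↦ (Algebra.norm K x, Algebra.trace K F x) = (n, t)).card +
      (Finset.univ.filter fun z : K × K ↦ (z.1 * z.2, z.1 + z.2) = (n, t)).card = 2 := by
  have hmem (x : F) : (Algebra.norm K x, Algebra.trace K F x) = (n, t) ↔
      x * x ^ Fintype.card K = algebraMap K F n ∧ x + x ^ Fintype.card K = algebraMap K F t := by
    rw [Prod.mk.injEq, ← algebraMap_norm_quad hF, ← algebraMap_trace_quad hF,
      (algebraMap K F).injective.eq_iff, (algebraMap K F).injective.eq_iff]
  have hinj := (algebraMap K F).injective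
  have h2F : (2 : F) ≠ 0 := by
    rw [← map_ofNat (algebraMap K F) 2]; simpa using h2
  simp only [hmem, Prod.mk.injEq]
  obtain ⟨δ, hδ⟩ := exists_sqrt_base hF h2 (t ^ 2 - 4 * n)
  have hD : δ ^ 2 = algebraMap K F t ^ 2 - 4 * algebraMap K F n := by
    rw [hδ, map_sub, map_pow, map_mul, map_ofNat]
  have h2Q : (2 : F) ^ Fintype.card K = 2 := by
    rw [← map_ofNat (algebraMap K F) 2]; exact algebraMap_pow_card _
  -- conjugation on the two candidates for `x`
  have hconj (y : F) : ((algebraMap K F t + y) / 2) ^ Fintype.card K =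
      (algebraMap K F t + y ^ Fintype.card K) / 2 := by
    rw [div_pow, add_pow_card_base, h2Q, algebraMap_pow_card]
  have hcand (x : F) (hx : x * x ^ Fintype.card K = algebraMap K F n ∧
      x + x ^ Fintype.card K = algebraMap K F t) :
      x = (algebraMap K F t + δ) / 2 ∨ x = (algebraMap K F t + -δ) / 2 := by
    have : (2 * x - algebraMap K F t - δ) * (2 * x - algebraMap K F t + δ) = 0 := by
      linear_combination 4 * x * hx.2 - 4 * hx.1 - hD
    rcases mul_eq_zero.mp this with h | h
    · left; field_simp; linear_combination h
    · right; field_simp; linear_combination h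
  have hδQ : δ ^ Fintype.card K = δ ∨ δ ^ Fintype.card K = -δ := by
    rw [← sq_eq_sq_iff_eq_or_eq_neg, ← pow_mul, mul_comm, pow_mul, hδ, algebraMap_pow_card]
  by_cases hδ0 : δ = 0
  · have e1 : (Finset.univ.filter fun x : F ↦ x * x ^ Fintype.card K = algebraMap K F n ∧
        x + x ^ Fintype.card K = algebraMap K F t) = {algebraMap K F t / 2} := by
      ext x
      simp only [Finset.mem_filter, Finset.mem_univ, true_and, Finset.mem_singleton]
      constructor
      · intro hx
        simpa [hδ0] using hcand x hx
      · rintro rfl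
        have := hconj 0
        rw [zero_pow Fintype.card_ne_zero, add_zero] at this
        rw [this]
        rw [hδ0] at hD
        constructor
        · field_simp; linear_combination -hD
        · field_simp; ring
    have e2 : (Finset.univ.filter fun z : K × K ↦ z.1 * z.2 = n ∧ z.1 + z.2 = t) =
        {(t / 2, t / 2)} := by
      have hD' : t ^ 2 - 4 * n = 0 := hinj (by rw [← hδ, hδ0]; simp)
      ext ⟨a, b⟩
      simp only [Finset.mem_filter, Finset.mem_univ, true_and, Finset.mem_singleton,
        Prod.mk.injEq]
      constructor
      · rintro ⟨h1, h3⟩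
        have : a - b = 0 := by
          apply pow_eq_zero_iff two_ne_zero |>.mp
          linear_combination (a + b + t) * h3 - 4 * h1 + hD'
        constructor
        · field_simp; linear_combination h3 + this
        · field_simp; linear_combination h3 - this
      · rintro ⟨rfl, rfl⟩
        constructor
        · field_simp; linear_combination hD'
        · field_simp; ring
    rw [e1, e2]; simp
  rcases hδQ with hQ | hQ
  · -- `δ` is fixed by conjugation, so it lies in `K`
    have hδK : ∃ d : K, algebraMap K F d = δ := by
      refine ⟨Algebra.trace K F δ / 2, ?_⟩
      rw [map_div₀, algebraMap_trace_quad hF, hQ, map_ofNat]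
      field_simp; ring
    obtain ⟨d, rfl⟩ := hδK
    have hd0 : d ≠ 0 := by rintro rfl; simp at hδ0
    have hdD : d ^ 2 = t ^ 2 - 4 * n := hinj (by simpa using hδ)
    have e1 : (Finset.univ.filter fun x : F ↦ x * x ^ Fintype.card K = algebraMap K F n ∧
        x + x ^ Fintype.card K = algebraMap K F t) = ∅ := by
      rw [Finset.filter_eq_empty_iff]
      intro x _ hx
      have hxx : x ^ Fintype.card K = x := by
        rcases hcand x hx with rfl | rfl
        · rw [hconj, hQ]
        · rw [hconj, ← map_neg, algebraMap_pow_card]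
      rw [hxx] at hx
      apply hδ0
      apply pow_eq_zero_iff two_ne_zero |>.mp
      linear_combination hD - (algebraMap K F t + 2 * x) * hx.2 + 4 * hx.1
    have e2 : (Finset.univ.filter fun z : K × K ↦ z.1 * z.2 = n ∧ z.1 + z.2 = t) =
        {((t + d) / 2, (t - d) / 2), ((t - d) / 2, (t + d) / 2)} := by
      ext ⟨a, b⟩
      simp only [Finset.mem_filter, Finset.mem_univ, true_and, Finset.mem_singleton,
        Finset.mem_insert, Prod.mk.injEq]
      constructor
      · rintro ⟨h1, h3⟩
        have : (a - b - d) * (a - b + d) = 0 := by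
          linear_combination (a + b + t) * h3 - 4 * h1 - hdD
        rcases mul_eq_zero.mp this with h | h
        · left; constructor <;> field_simp
          · linear_combination h3 + h
          · linear_combination h3 - h
        · right; constructor <;> field_simp
          · linear_combination h3 + h
          · linear_combination h3 - h
      · rintro (⟨rfl, rfl⟩ | ⟨rfl, rfl⟩)
        all_goals
          constructor
          · field_simp; linear_combination -hdD
          · field_simp; ring
    rw [e1, e2, Finset.card_empty, Finset.card_pair]
    intro h
    have h3 := (Prod.mk.inj h).1
    field_simp at h3
    have : 2 * d = 0 := by linear_combination h3
    simp [h2, hd0] at this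
  · have e1 : (Finset.univ.filter fun x : F ↦ x * x ^ Fintype.card K = algebraMap K F n ∧
        x + x ^ Fintype.card K = algebraMap K F t) =
        {(algebraMap K F t + δ) / 2, (algebraMap K F t + -δ) / 2} := by
      have hQ' : (-δ) ^ Fintype.card K = δ := by
        have := add_pow_card_base (K := K) δ (-δ)
        rw [add_neg_cancel, zero_pow Fintype.card_ne_zero, hQ] at this
        linear_combination -this
      ext x
      simp only [Finset.mem_filter, Finset.mem_univ, true_and, Finset.mem_singleton,
        Finset.mem_insert]
      refine ⟨hcand x, ?_⟩
      rintro (rfl | rfl)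
      · rw [hconj, hQ]
        constructor
        · field_simp; linear_combination -hD
        · field_simp; ring
      · rw [hconj, hQ']
        constructor
        · field_simp; linear_combination -hD
        · field_simp; ring
    have e2 : (Finset.univ.filter fun z : K × K ↦ z.1 * z.2 = n ∧ z.1 + z.2 = t) = ∅ := by
      rw [Finset.filter_eq_empty_iff]
      rintro ⟨a, b⟩ _ ⟨h1, h3⟩
      have : (algebraMap K F (a - b) - δ) * (algebraMap K F (a - b) + δ) = 0 := by
        have : (algebraMap K F (a - b)) ^ 2 = δ ^ 2 := by
          rw [hδ, ← map_pow]; congr 1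
          simp only at h1 h3
          linear_combination (a + b + t) * h3 - 4 * h1
        linear_combination this
      have hfix : δ ^ Fintype.card K = δ := by
        rcases mul_eq_zero.mp this with h | h
        · rw [← sub_eq_zero.mp h, algebraMap_pow_card]
        · have : δ = algebraMap K F (-(a - b)) := by rw [map_neg]; linear_combination h
          rw [this, algebraMap_pow_card]
      have : 2 * δ = 0 := by linear_combination hQ - hfix
      simp [h2F, hδ0] at this
    rw [e1, e2, Finset.card_empty, Finset.card_pair]
    intro h
    field_simp at h
    have : 2 * δ = 0 := by linear_combination h
    simp [h2F, hδ0] at this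

/-- The Hasse-Davenport lifting relation for a quadratic extension in odd characteristic. -/
theorem gaussSum_quad_lift (hF : Fintype.card F = Fintype.card K ^ 2) (h2 : (2 : K) ≠ 0)
    (χ : MulChar K ℂ) (e : AddChar K ℂ) (he : e ≠ 1) :
    ∑ x : F, χ (Algebra.norm K x) * e (Algebra.trace K F x) = -(gaussSum χ e) ^ 2 := by
  classical
  let f : K × K → ℂ := fun z ↦ χ z.1 * e z.2
  have h1 : ∑ x : F, χ (Algebra.norm K x) * e (Algebra.trace K F x) =
      ∑ z : K × K, ((Finset.univ.filter fun x : F ↦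
        (Algebra.norm K x, Algebra.trace K F x) = z).card : ℂ) * f z := by
    rw [← Finset.sum_fiberwise Finset.univ
      (fun x : F ↦ (Algebra.norm K x, Algebra.trace K F x))]
    refine Finset.sum_congr rfl fun z _ ↦ ?_
    rw [← nsmul_eq_mul, ← Finset.sum_const]
    refine Finset.sum_congr rfl fun x hx ↦ ?_
    rw [← (Finset.mem_filter.mp hx).2]
  have h3 : (gaussSum χ e) ^ 2 =
      ∑ z : K × K, ((Finset.univ.filter fun w : K × K ↦
        (w.1 * w.2, w.1 + w.2) = z).card : ℂ) * f z := by
    rw [sq, gaussSum, Finset.sum_mul_sum, ← Finset.sum_product', Finset.univ_product_univ,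
      ← Finset.sum_fiberwise Finset.univ (fun w : K × K ↦ (w.1 * w.2, w.1 + w.2))]
    refine Finset.sum_congr rfl fun z _ ↦ ?_
    rw [← nsmul_eq_mul, ← Finset.sum_const]
    refine Finset.sum_congr rfl fun x hx ↦ ?_
    rw [← (Finset.mem_filter.mp hx).2]
    simp only [f, map_mul, AddChar.map_add_eq_mul]
    ring
  have h4 : ∑ z : K × K, f z = 0 := by
    rw [← Finset.univ_product_univ, Finset.sum_product]
    simp only [f, ← Finset.mul_sum, AddChar.sum_eq_zero_of_ne_one he, mul_zero,
      Finset.sum_const_zero]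
  rw [eq_neg_iff_add_eq_zero, h1, h3, ← Finset.sum_add_distrib, ← mul_zero (2 : ℂ), ← h4,
    Finset.mul_sum]
  refine Finset.sum_congr rfl fun z _ ↦ ?_
  rw [← add_mul]
  congr 1
  exact_mod_cast card_norm_trace_fiber hF h2 z.1 z.2

/-- A character of `F` whose order divides `|K| - 1` factors through the norm to `K`: the norm of
a generator `g` of `Fˣ` generates `Kˣ`, so some `χ` takes the value `ψ g` there. -/
lemma exists_quad_lift {d : ℕ}
    (hd : d ∣ Fintype.card K - 1) (ψ : MulChar F ℂ) (hψ : orderOf ψ = d) :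
    ∃ χ : MulChar K ℂ, orderOf χ = d ∧ ∀ x : F, ψ x = χ (Algebra.norm K x) := by
  classical
  obtain ⟨g, hg⟩ := IsCyclic.exists_generator (α := Fˣ)
  set N : Fˣ →* Kˣ := Units.map (Algebra.norm K (S := F)) with hN
  have hNs : Function.Surjective N := FiniteField.unitsMap_norm_surjective K F
  have hgen : ∀ y : Kˣ, y ∈ Subgroup.zpowers (N g) := by
    intro y
    obtain ⟨x, rfl⟩ := hNs y
    obtain ⟨j, rfl⟩ := Subgroup.mem_zpowers_iff.mp (hg x)
    exact ⟨j, by simp⟩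
  have hζ : MulChar.equivToUnitHom ψ g ∈ rootsOfUnity (Fintype.card Kˣ) ℂ := by
    obtain ⟨c, hc⟩ := hd
    rw [mem_rootsOfUnity, Fintype.card_units, hc, pow_mul]
    have : (MulChar.equivToUnitHom ψ g) ^ d = 1 := by
      ext
      rw [Units.val_pow_eq_pow_val, MulChar.coe_equivToUnitHom, ← MulChar.pow_apply_coe, ← hψ,
        pow_orderOf_eq_one]
      simp
    rw [this, one_pow]
  let χ := MulChar.ofRootOfUnity hζ hgen
  have hχg : χ (N g) = ψ g := by
    rw [MulChar.ofRootOfUnity_spec, MulChar.coe_equivToUnitHom]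
  have hlift : ∀ x : F, ψ x = χ (Algebra.norm K x) := by
    intro x
    by_cases hx : x = 0
    · subst hx
      rw [Algebra.norm_zero, MulChar.map_zero, MulChar.map_zero]
    · have hcomp : MulChar.toUnitHom ψ = (MulChar.toUnitHom χ).comp N := by
        refine MonoidHom.eq_of_eqOn_dense (s := {g}) ?_ ?_
        · rw [eq_top_iff]
          intro y _
          rw [← Subgroup.zpowers_eq_closure]
          exact hg y
        · rintro _ rfl
          ext
          simp [hχg]
      have := congrArg Units.val (DFunLike.congr_fun hcomp (Units.mk0 x hx))
      simpa [MulChar.coe_toUnitHom, hN] using this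
  refine ⟨χ, ?_, hlift⟩
  rw [← hψ]
  refine Nat.dvd_antisymm ?_ ?_ <;> rw [orderOf_dvd_iff_pow_eq_one]
  · ext y
    obtain ⟨x, rfl⟩ := hNs y
    rw [MulChar.pow_apply_coe, show (N x : K) = Algebra.norm K (x : F) from rfl, ← hlift,
      ← MulChar.pow_apply_coe, pow_orderOf_eq_one, MulChar.one_apply_coe,
      show Algebra.norm K (x : F) = (N x : Kˣ) from rfl, MulChar.one_apply_coe]
  · ext x
    rw [MulChar.pow_apply_coe, hlift, show Algebra.norm K (x : F) = (N x : Kˣ) from rfl,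
      ← MulChar.pow_apply_coe, pow_orderOf_eq_one]
    simp
end lift

/-! ### Quartic Gauss sums over a quadratic extension of a field of size 3 mod 8 -/

section pure
variable {K F : Type*} [Field K] [Fintype K] [Field F] [Fintype F] [Algebra K F]

/-- An element of `Kˣ` is a norm `y ^ (|K| + 1)`, hence a fourth power in `F`. -/
lemma quartic_on_base (hF : Fintype.card F = Fintype.card K ^ 2) (hP : Fintype.card K % 8 = 3)
    (φ : MulChar F ℂ) (hφ : orderOf φ = 4) {a : K} (ha : a ≠ 0) : φ (algebraMap K F a) = 1 := by
  obtain ⟨y, rfl⟩ := FiniteField.norm_surjective K F a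
  have hy : IsUnit y := by
    rw [isUnit_iff_ne_zero]; rintro rfl; simp [Algebra.norm_zero] at ha
  obtain ⟨u, rfl⟩ := hy
  have h1 : φ ^ (Fintype.card K + 1) = 1 := by
    rw [← orderOf_dvd_iff_pow_eq_one, hφ]; omega
  rw [algebraMap_norm_quad hF, ← pow_succ', map_pow, ← MulChar.pow_apply_coe, h1,
    MulChar.one_apply_coe]

/-- Trace zero means `x ^ (|K| - 1) = -1`. For a generator `g` of `Fˣ` this forces `x = g ^ j` with
`j` an odd multiple of `(|K| + 1) / 2 ≡ 2 (mod 4)`, and `φ g ^ 2 = -1`. -/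
lemma quartic_on_trace_zero (hF : Fintype.card F = Fintype.card K ^ 2)
    (hP : Fintype.card K % 8 = 3)
    (φ : MulChar F ℂ) (hφ : orderOf φ = 4) {x : F} (hx : x ≠ 0)
    (htr : Algebra.trace K F x = 0) : φ x = -1 := by
  classical
  have h2F : (2 : F) ≠ 0 := by
    intro h
    have h8 : ringChar F = 2 := CharP.ringChar_of_prime_eq_zero Nat.prime_two (by exact_mod_cast h)
    have := FiniteField.even_card_of_char_two h8
    rw [hF, Nat.pow_mod, show Fintype.card K % 2 = 1 by omega] at this
    simp at this
  obtain ⟨g, hg⟩ := IsCyclic.exists_generator (α := Fˣ)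
  have hog : orderOf g = (Fintype.card K + 1) * (Fintype.card K - 1) := by
    rw [orderOf_eq_card_of_forall_mem_zpowers hg, Nat.card_eq_fintype_card, Fintype.card_units,
      hF, ← Nat.sq_sub_sq, one_pow]
  have hg2 : φ g ^ 2 = -1 := by
    have h4 : (φ g ^ 2) ^ 2 = 1 := by
      rw [← pow_mul, ← MulChar.pow_apply_coe, show 2 * 2 = orderOf φ from hφ.symm,
        pow_orderOf_eq_one, MulChar.one_apply_coe]
    rcases sq_eq_sq_iff_eq_or_eq_neg.mp (h4.trans (one_pow 2).symm) with h | h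
    · exfalso
      have : φ ^ 2 = 1 := by
        rw [MulChar.eq_iff hg, MulChar.pow_apply_coe, h, MulChar.one_apply_coe]
      rw [← orderOf_dvd_iff_pow_eq_one, hφ] at this
      omega
    · exact h
  have hxP : x * x ^ (Fintype.card K - 1) = - x := by
    have h := algebraMap_trace_quad hF x
    rw [htr, map_zero] at h
    rw [← pow_succ', Nat.sub_add_cancel (by omega)]
    linear_combination -h
  have hxP' : x ^ (Fintype.card K - 1) = -1 :=
    mul_left_cancel₀ hx (by rw [hxP, mul_neg_one])
  obtain ⟨j, hj⟩ := (mem_powers_iff_mem_zpowers (x := g) (y := Units.mk0 x hx)).mpr (hg _)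
  have hj' : x = (g : F) ^ j := by
    have := congrArg Units.val hj
    simpa using this.symm
  have hpos : 0 < Fintype.card K - 1 := by omega
  obtain ⟨c, hc⟩ : ∃ c, Fintype.card K + 1 = 4 * c := ⟨(Fintype.card K + 1) / 4, by omega⟩
  have hcodd : c % 2 = 1 := by omega
  -- with `P = |K|`: `x ^ (2 (P - 1)) = 1`, so `P + 1` divides `2 j`
  have hdvd : Fintype.card K + 1 ∣ 2 * j := by
    apply Nat.dvd_of_mul_dvd_mul_right hpos
    rw [← hog, orderOf_dvd_iff_pow_eq_one]
    ext
    have : x ^ (Fintype.card K - 1) * x ^ (Fintype.card K - 1) = 1 := by rw [hxP']; ring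
    rw [← pow_add, hj', ← pow_mul] at this
    rw [Units.val_pow_eq_pow_val, Units.val_one, ← this]
    congr 1; ring
  -- but `x ^ (P - 1) ≠ 1`, so `P + 1` does not divide `j`
  have hndvd : ¬ Fintype.card K + 1 ∣ j := by
    intro h
    have h3 := Nat.mul_dvd_mul_right h (Fintype.card K - 1)
    rw [← hog, orderOf_dvd_iff_pow_eq_one] at h3
    have h4 := congrArg Units.val h3
    rw [Units.val_pow_eq_pow_val, Units.val_one, pow_mul, ← hj', hxP'] at h4
    apply h2F
    linear_combination -h4
  obtain ⟨i, hi⟩ := hdvd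
  have hji : j = 2 * (c * i) := by
    rw [hc] at hi
    have : 2 * j = 2 * (2 * (c * i)) := by rw [hi]; ring
    omega
  have hiodd : i % 2 = 1 := by
    by_contra h
    obtain ⟨k, hk⟩ : ∃ k, i = 2 * k := ⟨i / 2, by omega⟩
    exact hndvd ⟨k, by rw [hji, hk, hc]; ring⟩
  rw [hj', map_pow, hji, pow_mul, hg2]
  exact Odd.neg_one_pow (Odd.mul (Nat.odd_iff.mpr hcodd) (Nat.odd_iff.mpr hiodd))

open Classical in
lemma card_trace_zero (hF : Fintype.card F = Fintype.card K ^ 2) :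
    (Finset.univ.filter fun x : F ↦ Algebra.trace K F x = 0).card = Fintype.card K := by
  have h1 := LinearMap.finrank_range_add_finrank_ker (Algebra.trace K F)
  rw [LinearMap.range_eq_top.mpr (Algebra.trace_surjective K F), finrank_top,
    Module.finrank_self, finrank_two hF] at h1
  have h2 := Module.card_eq_pow_finrank (K := K) (V := LinearMap.ker (Algebra.trace K F))
  rw [show Module.finrank K (LinearMap.ker (Algebra.trace K F)) = 1 by omega, pow_one] at h2
  rw [← h2, Fintype.card_subtype]
  simp only [LinearMap.mem_ker]

/-- A quartic Gauss sum over `F` equals `-|K|` when `|K| ≡ 3 (mod 8)`. The proof evaluates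
`∑ a : K, ∑ x : F, φ x * e (a * Tr x)` in two ways: each `a ≠ 0` contributes the Gauss sum because
`φ` is trivial on `Kˣ`, while summing over `a` first leaves only the `x` of trace zero. -/
theorem gaussSum_quartic_base (hF : Fintype.card F = Fintype.card K ^ 2)
    (hP : Fintype.card K % 8 = 3) (φ : MulChar F ℂ) (hφ : orderOf φ = 4)
    (e : AddChar K ℂ) (he : e ≠ 1) :
    ∑ x : F, φ x * e (Algebra.trace K F x) = -(Fintype.card K : ℂ) := by
  classical
  set G := ∑ x : F, φ x * e (Algebra.trace K F x) with hG
  have hφ1 : φ ≠ 1 := by rintro rfl; simp at hφ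
  have h0 : ∑ x : F, φ x * e (Algebra.trace K F x * 0) = 0 := by
    simpa using MulChar.sum_eq_zero_of_ne_one hφ1
  have hshift (a : K) (ha : a ≠ 0) : ∑ x : F, φ x * e (Algebra.trace K F x * a) = G := by
    rw [hG, ← Equiv.sum_comp (Equiv.mulLeft₀ (algebraMap K F a) (by simpa using ha))
      (fun x ↦ φ x * e (Algebra.trace K F x))]
    refine Finset.sum_congr rfl fun x _ ↦ ?_
    rw [Equiv.mulLeft₀_apply]
    change _ = φ (algebraMap K F a * x) * e (Algebra.trace K F (algebraMap K F a * x))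
    rw [map_mul φ, quartic_on_base hF hP φ hφ ha, one_mul,
      ← Algebra.smul_def, map_smul, smul_eq_mul, mul_comm a]
  have hA : ∑ a : K, ∑ x : F, φ x * e (Algebra.trace K F x * a) =
      ((Fintype.card K : ℂ) - 1) * G := by
    rw [← Finset.add_sum_erase _ _ (Finset.mem_univ 0), h0, zero_add,
      Finset.sum_congr rfl fun a ha ↦ hshift a (Finset.ne_of_mem_erase ha), Finset.sum_const,
      Finset.card_erase_of_mem (Finset.mem_univ _), Finset.card_univ, nsmul_eq_mul,
      Nat.cast_sub Fintype.card_pos, Nat.cast_one]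
  have hB : ∑ a : K, ∑ x : F, φ x * e (Algebra.trace K F x * a) =
      (Fintype.card K : ℂ) * -((Fintype.card K : ℂ) - 1) := by
    rw [Finset.sum_comm]
    have (x : F) : ∑ a : K, φ x * e (Algebra.trace K F x * a) =
        if Algebra.trace K F x = 0 then Fintype.card K * φ x else 0 := by
      rw [← Finset.mul_sum]
      simp_rw [mul_comm (Algebra.trace K F x)]
      rw [AddChar.sum_mulShift _ (AddChar.IsPrimitive.of_ne_one he)]
      split_ifs <;> ring
    simp_rw [this]
    rw [← Finset.sum_filter, ← Finset.mul_sum,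
      ← Finset.add_sum_erase _ _ (show (0 : F) ∈ _ by simp), MulChar.map_zero, zero_add]
    congr 1
    rw [Finset.sum_congr rfl (g := fun _ ↦ (-1 : ℂ)) fun x hx ↦ ?_, Finset.sum_const,
      Finset.card_erase_of_mem (by simp), card_trace_zero hF, nsmul_eq_mul,
      Nat.cast_sub Fintype.card_pos, Nat.cast_one, mul_neg_one]
    rw [Finset.mem_erase, Finset.mem_filter] at hx
    exact quartic_on_trace_zero hF hP φ hφ hx.1 hx.2.2
  have hne : (Fintype.card K : ℂ) - 1 ≠ 0 := by
    rw [sub_ne_zero]; exact_mod_cast (Fintype.one_lt_card (α := K)).ne'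
  apply mul_left_cancel₀ hne
  rw [← hA, hB]; ring
end pure

/-! ### Gauss sums for the trace character -/

section traceChar

/-- The canonical additive character `x ↦ exp (2πi Tr x / p)` of a finite field. -/
noncomputable def traceChar (p : ℕ) [Fact p.Prime] (F : Type*) [Field F] [Algebra (ZMod p) F] :
    AddChar F ℂ :=
  (ZMod.stdAddChar (N := p)).compAddMonoidHom (Algebra.trace (ZMod p) F).toAddMonoidHom

variable (p : ℕ) [Fact p.Prime]

lemma gaussC_eq (F : Type*) [Field F] [Fintype F] [Algebra (ZMod p) F] (ψ : MulChar F ℂ) :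
    gaussC p F ψ = gaussSum ψ (traceChar p F) := by
  refine Finset.sum_congr rfl fun x _ ↦ ?_
  congr 1
  have h := ZMod.stdAddChar_coe (N := p) ((Algebra.trace (ZMod p) F x).val : ℤ)
  rw [Int.cast_natCast, ZMod.natCast_zmod_val] at h
  simp only [traceChar, AddChar.compAddMonoidHom_apply, LinearMap.toAddMonoidHom_coe]
  rw [h, Int.cast_natCast]

lemma traceChar_ne_one (F : Type*) [Field F] [Finite F] [Algebra (ZMod p) F] :
    traceChar p F ≠ 1 := by
  obtain ⟨x, hx⟩ := Algebra.trace_surjective (ZMod p) F 1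
  rw [AddChar.ne_one_iff]
  refine ⟨x, fun h ↦ ?_⟩
  simp only [traceChar, AddChar.compAddMonoidHom_apply, LinearMap.toAddMonoidHom_coe, hx] at h
  rw [← (ZMod.stdAddChar (N := p)).map_zero_eq_one] at h
  exact one_ne_zero (ZMod.injective_stdAddChar h)

variable {K F : Type*} [Field K] [Fintype K] [Field F] [Fintype F] [Algebra K F]
  [Algebra (ZMod p) K] [Algebra (ZMod p) F]

lemma traceChar_tower (x : F) : traceChar p F x = traceChar p K (Algebra.trace K F x) := by
  have : IsScalarTower (ZMod p) K F := IsScalarTower.of_algebraMap_eq' (Subsingleton.elim _ _)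
  simp only [traceChar, AddChar.compAddMonoidHom_apply, LinearMap.toAddMonoidHom_coe,
    Algebra.trace_trace]

/-- The quadratic Hasse-Davenport relation for the canonical additive characters. -/
lemma gaussC_lift (hF : Fintype.card F = Fintype.card K ^ 2) (h2 : (2 : K) ≠ 0)
    (χ : MulChar K ℂ) (ψ : MulChar F ℂ) (h : ∀ x : F, ψ x = χ (Algebra.norm K x)) :
    gaussC p F ψ = -(gaussC p K χ) ^ 2 := by
  rw [gaussC_eq, gaussC_eq, ← gaussSum_quad_lift hF h2 χ _ (traceChar_ne_one p K), gaussSum]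
  exact Finset.sum_congr rfl fun x _ ↦ by rw [h, traceChar_tower p (K := K)]

end traceChar

lemma exists_subfield_card (p m : ℕ) [Fact p.Prime] (hm : 0 < m) (K : Type*) [Field K]
    [Fintype K] [Algebra (ZMod p) K] (hK : Fintype.card K = p ^ (2 * m)) :
    ∃ L : Subfield K, Nat.card L = p ^ m := by
  have h1 : Module.finrank (ZMod p) K = 2 * m := by
    have h := Module.card_eq_pow_finrank (K := ZMod p) (V := K)
    rw [hK, ZMod.card] at h
    exact (Nat.pow_right_injective (Fact.out : p.Prime).two_le h).symm
  obtain ⟨f⟩ := FiniteField.nonempty_algHom_of_finrank_dvd (F := ZMod p)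
    (K := GaloisField p m) (L := K) (by rw [h1, GaloisField.finrank p hm.ne']; exact ⟨2, by ring⟩)
  refine ⟨f.toRingHom.fieldRange, ?_⟩
  rw [← GaloisField.card p m hm.ne']
  exact (Nat.card_congr (Equiv.ofInjective f f.injective)).symm

/-- Stickelberger's evaluation of quartic Gauss sums, for `p ≡ 3 (mod 8)`. -/
theorem gaussC_quartic (p : ℕ) [Fact p.Prime] (hp : p % 8 = 3) (m : ℕ) :
    0 < m → ∀ (K : Type*) [Field K] [Fintype K] [Algebra (ZMod p) K],
      Fintype.card K = p ^ (2 * m) → ∀ φ : MulChar K ℂ, orderOf φ = 4 →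
        gaussC p K φ = -(p : ℂ) ^ m := by
  induction m using Nat.strong_induction_on with
  | _ m ih =>
  intro hm K _ _ _ hK φ hφ
  obtain ⟨L, hL⟩ := exists_subfield_card p m hm K hK
  have : Fintype L := Fintype.ofFinite L
  rw [Nat.card_eq_fintype_card] at hL
  have hKL : Fintype.card K = Fintype.card L ^ 2 := by rw [hK, hL, ← pow_mul, mul_comm]
  have hcK : CharP K p := charP_of_injective_algebraMap (algebraMap (ZMod p) K).injective p
  have hcL : CharP L p := (RingHom.charP_iff (algebraMap L K) (algebraMap L K).injective p).mpr hcK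
  let _ : Algebra (ZMod p) L := ZMod.algebra L p
  have hsq : p ^ 2 % 8 = 1 := by rw [Nat.pow_mod, hp]
  rcases Nat.even_or_odd' m with ⟨k, rfl | rfl⟩
  · have hk : 0 < k := by omega
    have h8 : p ^ (2 * k) % 8 = 1 := by rw [pow_mul, Nat.pow_mod, hsq]; simp
    obtain ⟨χ, hχ, hlift⟩ := exists_quad_lift (d := 4) (by rw [hL]; omega) φ hφ
    have h2 : (2 : L) ≠ 0 := by
      have := (CharP.cast_eq_zero_iff L p 2).not.mpr
        (fun h ↦ by have := Nat.le_of_dvd two_pos h; omega)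
      exact_mod_cast this
    rw [gaussC_lift p hKL h2 χ φ hlift, ih k (by omega) hk L hL χ hχ]
    ring
  · have h3 : Fintype.card L % 8 = 3 := by
      rw [hL, pow_succ, pow_mul, Nat.mul_mod, Nat.pow_mod (p ^ 2), hsq, hp]; simp
    rw [gaussC_eq, gaussSum]
    simp_rw [fun x : K ↦ traceChar_tower p (K := L) x]
    rw [gaussSum_quartic_base hKL h3 φ hφ _ (traceChar_ne_one p L), hL, Nat.cast_pow]

theorem stmt13 (p s : ℕ) [Fact p.Prime] (hp : p % 8 = 3) (hs : 0 < s)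
    (F K : Type*) [Field F] [Fintype F] [Algebra (ZMod p) F]
    [Field K] [Fintype K] [Algebra K F]
    (hcardF : Fintype.card F = p ^ s) (hcardK : Fintype.card K = p ^ (s / 2))
    (h16 : 16 ∣ p ^ s - 1)
    (ψ : MulChar F ℂ) (hord : orderOf ψ = 8) :
    ∃ χ : MulChar K ℂ, orderOf χ = 8 ∧ (∀ x : F, ψ x = χ (Algebra.norm K x)) ∧
      gaussC p F ψ = (((p : ℝ) ^ s) ^ ((1 : ℝ) / 4) : ℝ) * jacobiC K χ := by
  -- the order of `p` modulo 16 is 4, as `p` is 3 or 11 modulo 16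
  obtain ⟨m, rfl⟩ : ∃ m, s = 4 * m := by
    have hpos : 0 < p ^ s := pow_pos (by omega) s
    have h1 : p ^ s % 16 = 1 := by omega
    have h4 : p ^ 4 % 16 = 1 := by
      rcases (by omega : p % 16 = 3 ∨ p % 16 = 11) with h | h <;> rw [Nat.pow_mod, h]
    have hred : p ^ s % 16 = p ^ (s % 4) % 16 := by
      conv_lhs => rw [← Nat.div_add_mod s 4, pow_add, pow_mul, Nat.mul_mod, Nat.pow_mod (p ^ 4), h4]
      simp
    rw [hred] at h1
    refine ⟨s / 4, ?_⟩
    have : s % 4 < 4 := Nat.mod_lt _ (by norm_num)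
    rcases (by omega : p % 16 = 3 ∨ p % 16 = 11) with h | h <;>
      rw [Nat.pow_mod, h] at h1 <;> interval_cases hr : s % 4 <;> omega
  have hm : 0 < m := by omega
  rw [show 4 * m / 2 = 2 * m by omega] at hcardK
  have hFK : Fintype.card F = Fintype.card K ^ 2 := by
    rw [hcardF, hcardK, ← pow_mul]; congr 1; ring
  have hcF : CharP F p := charP_of_injective_algebraMap (algebraMap (ZMod p) F).injective p
  have hcK : CharP K p := (RingHom.charP_iff (algebraMap K F) (algebraMap K F).injective p).mpr hcF
  let _ : Algebra (ZMod p) K := ZMod.algebra K p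
  have hsq : p ^ 2 % 8 = 1 := by rw [Nat.pow_mod, hp]
  have h8 : p ^ (2 * m) % 8 = 1 := by rw [pow_mul, Nat.pow_mod, hsq]; simp
  have h2 : (2 : K) ≠ 0 := by
    have := (CharP.cast_eq_zero_iff K p 2).not.mpr
      (fun h ↦ by have := Nat.le_of_dvd two_pos h; omega)
    exact_mod_cast this
  obtain ⟨χ, hχ, hlift⟩ := exists_quad_lift (d := 8) (by rw [hcardK]; omega) ψ hord
  refine ⟨χ, hχ, hlift, ?_⟩
  have hχ2 : orderOf (χ * χ) = 4 := by
    rw [← sq, orderOf_pow_of_dvd two_ne_zero (hχ ▸ by norm_num), hχ]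
  have hne : χ * χ ≠ 1 := fun h ↦ by rw [h, orderOf_one] at hχ2; omega
  have hJ := jacobiSum_mul_nontrivial hne (traceChar p K)
  rw [← gaussC_eq, ← gaussC_eq, gaussC_quartic p hp m hm K hcardK _ hχ2, ← sq] at hJ
  have hroot : ((p : ℝ) ^ (4 * m)) ^ ((1 : ℝ) / 4) = (p : ℝ) ^ m := by
    rw [mul_comm, pow_mul, one_div]
    exact_mod_cast Real.pow_rpow_inv_natCast (x := (p : ℝ) ^ m) (by positivity) four_ne_zero
  rw [gaussC_lift p hFK h2 χ ψ hlift, ← hJ, hroot]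
  simp only [jacobiC, jacobiSum, Complex.ofReal_pow, Complex.ofReal_natCast]
  ring
end
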